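/- Relative Oscillation Theorem, other half-open case: Let λ_0, λ_1 ∈ ℝ and for j = 0,1 let u_{j,−}(λ_j) be a solution of τ_j u = λ_j u with u_{j,−}(λ_j, 0) = 0 and u_{j,+}(λ_j) a solution of τ_j u = λ_j u with u_{j,+}(λ_j, N) = 0. Then E_{(−∞,λ_1]}(J_1) − E_{(−∞,λ_0)}(J_0) = #_{[0,N)}(u_{0,+}(λ_0), u_{1,−}(λ_1)) = #_{[0,N)}(u_{0,−}(λ_0), u_{1,+}(λ_1)). -/

import Mathlib

/-!
Let `θ_j(n)` be the Prüfer angle of `u_j`, so that the Wronskian `W_n` is a positive multiple of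
`sin (θ₁ - θ₀)`. The weighted node sign `#_n` is the increment of `⌈(θ₁ - θ₀) / π⌉`. Angles are not
needed to say this: writing `θ_j = k_j π + φ_j` with `φ_j ∈ (0, π]`, the increment of `k_j` is the
indicator of a node of `u_j`, and `φ₁ > φ₀` is a condition on the sign of `W_n`. The resulting
identity `jSgn_eq` is a statement about finitely many signs (`sign_table`). Summing it expresses
`#_{[0,N)}` through the node counts of `u₀` and `u₁` and boundary terms (`cntCO_plus_minus`,
`cntCO_minus_plus`).

It remains to relate node counts to eigenvalues of one operator, and the same identity does this.
For equal energies the Wronskian is constant, which equates, up to a boundary term, the node counts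
of the solutions vanishing at `0` and at `N` (`nodeSum_minus_eq`). For energies `z₀ < z₁` and
solutions vanishing at `0` there are only positive weighted nodes, one of them at `0`, so the node
count increases with the energy, strictly when passing an eigenvalue (`nodeSum_strict`). Hence the
number of nodes at `1, …, N - 1` is at least the number of eigenvalues below `z`, and at most
`N - 1` minus the number of eigenvalues `≥ z`. Since a Jacobi matrix has `N - 1` distinct
eigenvalues, equality holds (`evCount_eq`).
-/

open Real

noncomputable section

/-- The Jacobi difference expression `(τ u)(n) = a(n)u(n+1) + a(n-1)u(n-1) + b(n)u(n)`. -/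
def jTau (a b : ℤ → ℝ) (u : ℤ → ℝ) (n : ℤ) : ℝ :=
  a n * u (n + 1) + a (n - 1) * u (n - 1) + b n * u n

/-- `u` is a solution of `τ u = z u`: not identically zero and satisfying the recursion. -/
def IsJSolution (a b : ℤ → ℝ) (z : ℝ) (u : ℤ → ℝ) : Prop :=
  u ≠ 0 ∧ ∀ n : ℤ, jTau a b u n = z * u n

/-- The (N-1)×(N-1) Jacobi matrix with diagonal b(1),…,b(N-1) and
off-diagonal a(1),…,a(N-2). -/
def jMatrix (N : ℕ) (a b : ℤ → ℝ) : Matrix (Fin (N - 1)) (Fin (N - 1)) ℝ :=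
  fun i j =>
    if (i : ℕ) = (j : ℕ) then b (((i : ℕ) : ℤ) + 1)
    else if (i : ℕ) + 1 = (j : ℕ) then a (((i : ℕ) : ℤ) + 1)
    else if (j : ℕ) + 1 = (i : ℕ) then a (((j : ℕ) : ℤ) + 1)
    else 0

/-- `μ` is an eigenvalue of the matrix `J`. -/
def IsEV {m : ℕ} (J : Matrix (Fin m) (Fin m) ℝ) (μ : ℝ) : Prop :=
  ∃ v : Fin m → ℝ, v ≠ 0 ∧ J.mulVec v = μ • v

/-- The number of eigenvalues of `J` in `Ω`. -/
def evCount {m : ℕ} (J : Matrix (Fin m) (Fin m) ℝ) (Ω : Set ℝ) : ℕ :=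
  {μ ∈ Ω | IsEV J μ}.ncard

/-- The (modified) Wronskian `W_n(u₀,u₁) = u₀(n)a₁(n)u₁(n+1) - u₁(n)a₀(n)u₀(n+1)`. -/
def jW (a0 a1 : ℤ → ℝ) (u0 u1 : ℤ → ℝ) (n : ℤ) : ℝ :=
  u0 n * a1 n * u1 (n + 1) - u1 n * a0 n * u0 (n + 1)

open Classical in
/-- The weighted node sign `#_n(u₀,u₁) ∈ {-1,0,1}` of the Wronskian at `n`. -/
def jSgn (a0 a1 u0 u1 : ℤ → ℝ) (n : ℤ) : ℤ :=
  if jW a0 a1 u0 u1 (n + 1) * u0 (n + 1) * u1 (n + 1) > 0 ∧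
      (jW a0 a1 u0 u1 n * jW a0 a1 u0 u1 (n + 1) < 0 ∨
        (jW a0 a1 u0 u1 n = 0 ∧ jW a0 a1 u0 u1 (n + 1) ≠ 0)) then 1
  else if jW a0 a1 u0 u1 n * u0 (n + 1) * u1 (n + 1) > 0 ∧
      (jW a0 a1 u0 u1 n * jW a0 a1 u0 u1 (n + 1) < 0 ∨
        (jW a0 a1 u0 u1 n ≠ 0 ∧ jW a0 a1 u0 u1 (n + 1) = 0)) then -1
  else 0

/-- `#_{[m,n]}(u₀,u₁) = Σ_{j=m}^{n-1} #_j(u₀,u₁)`. -/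
def cntCC (a0 a1 u0 u1 : ℤ → ℝ) (m n : ℤ) : ℤ :=
  ∑ j ∈ Finset.Ico m n, jSgn a0 a1 u0 u1 j

open Classical in
/-- `#_{(m,n]}(u₀,u₁)`. -/
def cntOC (a0 a1 u0 u1 : ℤ → ℝ) (m n : ℤ) : ℤ :=
  cntCC a0 a1 u0 u1 m n - if jW a0 a1 u0 u1 m = 0 then 1 else 0

open Classical in
/-- `#_{[m,n)}(u₀,u₁)`. -/
def cntCO (a0 a1 u0 u1 : ℤ → ℝ) (m n : ℤ) : ℤ :=
  cntCC a0 a1 u0 u1 m n + if jW a0 a1 u0 u1 n = 0 then 1 else 0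

open Classical in
/-- `#_{(m,n)}(u₀,u₁)`. -/
def cntOO (a0 a1 u0 u1 : ℤ → ℝ) (m n : ℤ) : ℤ :=
  cntCC a0 a1 u0 u1 m n - (if jW a0 a1 u0 u1 m = 0 then 1 else 0)
    + (if jW a0 a1 u0 u1 n = 0 then 1 else 0)

/-- `n` is a node of `u`: `u(n) = 0` or `a(n)u(n)u(n+1) > 0`. -/
def IsNode (a u : ℤ → ℝ) (n : ℤ) : Prop :=
  u n = 0 ∨ a n * u n * u (n + 1) > 0

open Classical in
/-- The number of nodes of `u` between `m` and `l`: nodes `n` with `m < n < l`,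
plus one if `m` is a node with `u(m) ≠ 0`. -/
def nodeCount (a u : ℤ → ℝ) (m l : ℤ) : ℕ :=
  ((Finset.Ioo m l).filter (fun n => IsNode a u n)).card +
    if IsNode a u m ∧ u m ≠ 0 then 1 else 0

/-- `ρ, θ` are Prüfer variables for `u` (w.r.t. the coefficient `a`). -/
def IsPrufer (a u ρ θ : ℤ → ℝ) : Prop :=
  ∀ n : ℤ, 0 < ρ n ∧ u n = ρ n * Real.sin (θ n) ∧
    -(a n) * u (n + 1) = ρ n * Real.cos (θ n) ∧
    ⌈θ n / π⌉ ≤ ⌈θ (n + 1) / π⌉ ∧ ⌈θ (n + 1) / π⌉ ≤ ⌈θ n / π⌉ + 1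

/-! ### Nodes, orientation, and solutions on the right half line -/

open Classical in
/-- Indicator of a node of `u` at `n`. For negative off-diagonal coefficients this is the indicator
of `IsNode`; in Prüfer terms it is the increment of `⌈θ / π⌉` from `n` to `n + 1`. -/
def nodeInd (u : ℤ → ℝ) (n : ℤ) : ℤ :=
  if u n = 0 ∨ u n * u (n + 1) < 0 then 1 else 0

/-- Number of nodes of `u` at the sites `0, …, N - 1`. -/
def nodeSum (u : ℤ → ℝ) (N : ℕ) : ℤ := ∑ j ∈ Finset.range N, nodeInd u j

open Classical in
/-- A real number whose sign is `(-1) ^ (⌈θ / π⌉ - 1)` for the Prüfer angle `θ` of `u` at `n`: the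
value `u n`, or `-u (n + 1)` where `u n = 0`. Only its sign matters. -/
def orient (u : ℤ → ℝ) (n : ℤ) : ℝ :=
  if u n = 0 then -u (n + 1) else u n

open Classical in
/-- Indicator that the Wronskian is positive after both solutions are normalised to have positive
`orient` at `n`. Writing each Prüfer angle as `kπ + φ` with `φ ∈ (0, π]`, this says `φ₁ > φ₀`, so
`⌈(θ₁ - θ₀) / π⌉ = k₁ - k₀ + posInd`. -/
def posInd (a0 a1 u0 u1 : ℤ → ℝ) (n : ℤ) : ℤ :=
  if 0 < orient u0 n * orient u1 n * jW a0 a1 u0 u1 n then 1 else 0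

/-- A solution of `τ u = z u` at the sites `n ≥ 1`, with no two consecutive zeros at sites `≥ 0`.
This is all that the finite interval `[0, N]` sees, and it allows solutions to be built by a
one-sided recursion. -/
structure RightSol (a b : ℤ → ℝ) (z : ℝ) (u : ℤ → ℝ) : Prop where
  eqn : ∀ n : ℤ, 1 ≤ n → jTau a b u n = z * u n
  nondeg : ∀ n : ℤ, 0 ≤ n → u n ≠ 0 ∨ u (n + 1) ≠ 0

/-- A solution changes sign across an interior zero. -/
lemma RightSol.flank {a b : ℤ → ℝ} {z : ℝ} {u : ℤ → ℝ} (ha : ∀ n, a n < 0)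
    (h : RightSol a b z u) {n : ℤ} (hn : 0 ≤ n) (h0 : u (n + 1) = 0) :
    u n * u (n + 1 + 1) < 0 := by
  have h1 := h.eqn (n + 1) (by omega)
  have h2 := (h.nondeg n hn).resolve_right (by simpa using h0)
  simp only [jTau, h0, mul_zero, add_zero, add_sub_cancel_right] at h1
  have h3 := ha n
  have h4 := ha (n + 1)
  have h5 : u (n + 1 + 1) = -(a n / a (n + 1)) * u n := by
    field_simp [h4.ne]
    linarith
  have h6 : 0 < a n / a (n + 1) := div_pos_of_neg_of_neg h3 h4
  have h7 : 0 < u n ^ 2 := by positivity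
  rw [h5]
  nlinarith [mul_pos h6 h7]

/-! ### The local identity for the weighted node sign -/

/-- At a zero `u (n + 1) = 0` the orientation is inherited from `u n`. -/
lemma sign_orient_succ {a b : ℤ → ℝ} {z : ℝ} {u : ℤ → ℝ} (ha : ∀ n, a n < 0)
    (h : RightSol a b z u) {n : ℤ} (hn : 0 ≤ n) :
    SignType.sign (orient u (n + 1)) =
      if SignType.sign (u (n + 1)) = 0 then SignType.sign (u n) else SignType.sign (u (n + 1)) := by
  unfold orient
  by_cases h0 : u (n + 1) = 0
  · have f := h.flank ha hn h0
    rw [← sign_eq_neg_one_iff, _root_.sign_mul] at f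
    simp only [h0, _root_.sign_zero, if_pos, Left.sign_neg]
    revert f
    generalize SignType.sign (u n) = x
    generalize SignType.sign (u (n + 1 + 1)) = y
    revert x y
    decide
  · simp [h0]

/-- The local identity `jSgn_eq` at the level of signs. Here `p, p1` stand for the signs of `u₀` at
`n, n + 1`, `r, r1` for those of `u₁`, and `W, V` for those of the Wronskian at `n, n + 1`. The
hypotheses `hW0, hW1` record what the sign of `W` is when it is determined by the other signs, and
`hV0, hV1` do so for `V`. -/
lemma sign_table (p p1 r r1 W V : SignType)
    (d0 : p ≠ 0 ∨ p1 ≠ 0) (d1 : r ≠ 0 ∨ r1 ≠ 0)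
    (hW0 : p * r1 = r * p1 → p * r1 = 0 → W = 0)
    (hW1 : p * r1 ≠ r * p1 → W = if r * p1 = 0 then -(p * r1) else r * p1)
    (hV0 : p1 = 0 → V = -(r1 * p)) (hV1 : r1 = 0 → V = p1 * r) :
    (if V * p1 * r1 = 1 ∧ (W * V = -1 ∨ (W = 0 ∧ V ≠ 0)) then (1 : ℤ)
      else if W * p1 * r1 = 1 ∧ (W * V = -1 ∨ (W ≠ 0 ∧ V = 0)) then -1 else 0)
    = (if r = 0 ∨ r * r1 = -1 then 1 else 0) - (if p = 0 ∨ p * p1 = -1 then 1 else 0)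
      + (if (if p1 = 0 then p else p1) * (if r1 = 0 then r else r1) * V = 1 then 1 else 0)
      - (if (if p = 0 then -p1 else p) * (if r = 0 then -r1 else r) * W = 1 then 1 else 0) := by
  revert d0 d1 hW0 hW1 hV0 hV1
  revert p p1 r r1 W V
  decide

lemma sign_comb {α β x y : ℝ} (hα : α < 0) (hβ : β < 0)
    (hne : SignType.sign x ≠ SignType.sign y) :
    SignType.sign (-α * y + β * x) =
      if SignType.sign y = 0 then -SignType.sign x else SignType.sign y := by
  rcases lt_trichotomy y 0 with hy | hy | hy
  · have hx : 0 ≤ x := by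
      by_contra! hx
      exact hne (by rw [_root_.sign_neg hx, _root_.sign_neg hy])
    rw [_root_.sign_neg hy, if_neg (by decide), sign_eq_neg_one_iff]
    nlinarith
  · subst hy
    rw [_root_.sign_zero, if_pos rfl, mul_zero, zero_add, _root_.sign_mul, _root_.sign_neg hβ, neg_one_mul]
  · have hx : x ≤ 0 := by
      by_contra! hx
      exact hne (by rw [sign_pos hx, sign_pos hy])
    rw [sign_pos hy, if_neg (by decide), sign_eq_one_iff]
    nlinarith

/-- The weighted node sign is the increment of `⌈(θ₁ - θ₀) / π⌉`, expressed through node counts and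
normalised Wronskian signs. -/
lemma jSgn_eq {a0 b0 a1 b1 : ℤ → ℝ} {z0 z1 : ℝ} {u0 u1 : ℤ → ℝ}
    (ha0 : ∀ n, a0 n < 0) (ha1 : ∀ n, a1 n < 0)
    (h0 : RightSol a0 b0 z0 u0) (h1 : RightSol a1 b1 z1 u1) {n : ℤ} (hn : 0 ≤ n) :
    jSgn a0 a1 u0 u1 n = nodeInd u1 n - nodeInd u0 n
      + posInd a0 a1 u0 u1 (n + 1) - posInd a0 a1 u0 u1 n := by
  have d0 := h0.nondeg n hn
  have d1 := h1.nondeg n hn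
  have f0 := h0.flank ha0 hn
  have f1 := h1.flank ha1 hn
  have A := ha0 n
  have B := ha1 n
  have A' := ha0 (n + 1)
  have B' := ha1 (n + 1)
  have hW : jW a0 a1 u0 u1 n = u0 n * a1 n * u1 (n + 1) - u1 n * a0 n * u0 (n + 1) := rfl
  have hV : jW a0 a1 u0 u1 (n + 1) = u0 (n + 1) * a1 (n + 1) * u1 (n + 1 + 1)
    - u1 (n + 1) * a0 (n + 1) * u0 (n + 1 + 1) := rfl
  have s0 : SignType.sign (orient u0 n) =
      if SignType.sign (u0 n) = 0 then -SignType.sign (u0 (n + 1)) else SignType.sign (u0 n) := by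
    unfold orient
    by_cases h : u0 n = 0 <;> simp [h, Left.sign_neg]
  have s1 : SignType.sign (orient u1 n) =
      if SignType.sign (u1 n) = 0 then -SignType.sign (u1 (n + 1)) else SignType.sign (u1 n) := by
    unfold orient
    by_cases h : u1 n = 0 <;> simp [h, Left.sign_neg]
  have s0' := sign_orient_succ ha0 h0 hn
  have s1' := sign_orient_succ ha1 h1 hn
  have key := sign_table (SignType.sign (u0 n)) (SignType.sign (u0 (n + 1)))
    (SignType.sign (u1 n)) (SignType.sign (u1 (n + 1)))
    (SignType.sign (jW a0 a1 u0 u1 n)) (SignType.sign (jW a0 a1 u0 u1 (n + 1)))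
    (by simpa only [ne_eq, _root_.sign_eq_zero_iff] using d0)
    (by simpa only [ne_eq, _root_.sign_eq_zero_iff] using d1)
    (by
      intro e1 e2
      rw [e2] at e1
      rw [← _root_.sign_mul, _root_.sign_eq_zero_iff] at e2
      rw [← _root_.sign_mul, eq_comm, _root_.sign_eq_zero_iff] at e1
      rw [_root_.sign_eq_zero_iff, hW]
      linear_combination a1 n * e2 - a0 n * e1)
    (by
      intro hne
      have hW2 : jW a0 a1 u0 u1 n =
        -(a0 n) * (u1 n * u0 (n + 1)) + (a1 n) * (u0 n * u1 (n + 1)) := by rw [hW]; ring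
      rw [hW2]
      simp only [← _root_.sign_mul] at hne ⊢
      generalize u1 n * u0 (n + 1) = y at *
      generalize u0 n * u1 (n + 1) = x at *
      exact sign_comb A B hne)
    (by
      intro h
      rw [_root_.sign_eq_zero_iff] at h
      have hV2 : jW a0 a1 u0 u1 (n + 1) =
        -a0 (n + 1) * (u1 (n + 1) * u0 (n + 1 + 1)) := by rw [hV, h]; ring
      have f := f0 h
      rw [← sign_eq_neg_one_iff, _root_.sign_mul] at f
      have : SignType.sign (-a0 (n + 1)) = 1 := sign_pos (by linarith)
      rw [hV2, _root_.sign_mul, _root_.sign_mul, this]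
      revert f
      generalize SignType.sign (u0 n) = x
      generalize SignType.sign (u0 (n + 1 + 1)) = y
      generalize SignType.sign (u1 (n + 1)) = w
      revert x y w
      decide)
    (by
      intro h
      rw [_root_.sign_eq_zero_iff] at h
      have hV2 : jW a0 a1 u0 u1 (n + 1) =
        a1 (n + 1) * (u0 (n + 1) * u1 (n + 1 + 1)) := by rw [hV, h]; ring
      have f := f1 h
      rw [← sign_eq_neg_one_iff, _root_.sign_mul] at f
      have : SignType.sign (a1 (n + 1)) = -1 := _root_.sign_neg (by linarith)
      rw [hV2, _root_.sign_mul, _root_.sign_mul, this]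
      revert f
      generalize SignType.sign (u1 n) = x
      generalize SignType.sign (u1 (n + 1 + 1)) = y
      generalize SignType.sign (u0 (n + 1)) = w
      revert x y w
      decide)
  rw [← s0, ← s1, ← s0', ← s1'] at key
  simp only [← _root_.sign_mul, sign_eq_one_iff, sign_eq_neg_one_iff, _root_.sign_eq_zero_iff, ne_eq] at key
  unfold jSgn nodeInd posInd
  convert key

/-! ### Solutions of the recursion -/

lemma nondeg_of_eqn {a b : ℤ → ℝ} {z : ℝ} {u : ℤ → ℝ} (ha : ∀ n, a n < 0)
    (h : ∀ n : ℤ, 1 ≤ n → jTau a b u n = z * u n) (h0 : u 0 ≠ 0 ∨ u 1 ≠ 0) :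
    ∀ n : ℤ, 0 ≤ n → u n ≠ 0 ∨ u (n + 1) ≠ 0 := by
  intro n hn
  induction n, hn using Int.leInduction with
  | base => simpa using h0
  | succ n hn ih =>
    by_contra! hc
    have h1 := h (n + 1) (by omega)
    simp only [jTau, hc.1, hc.2, mul_zero, add_sub_cancel_right, add_zero, zero_add] at h1
    rcases mul_eq_zero.1 h1 with h2 | h2
    · exact (ha n).ne h2
    · rcases ih with h3 | h3
      · exact h3 h2
      · exact h3 hc.1

lemma IsJSolution.rightSol {a b : ℤ → ℝ} {z : ℝ} {u : ℤ → ℝ} (ha : ∀ n, a n < 0)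
    (h : IsJSolution a b z u) : RightSol a b z u := by
  refine ⟨fun n _ => h.2 n, nondeg_of_eqn ha (fun n _ => h.2 n) ?_⟩
  by_contra! hc
  apply h.1
  have up : ∀ k : ℕ, u k = 0 ∧ u (k + 1) = 0 := by
    intro k
    induction k with
    | zero => simpa using hc
    | succ k ih =>
      have h1 := h.2 (k + 1)
      simp only [jTau, ih.1, ih.2, mul_zero, add_sub_cancel_right, add_zero] at h1
      push_cast
      exact ⟨ih.2, (mul_eq_zero.1 h1).resolve_left (ha _).ne⟩
  have down : ∀ k : ℕ, u (-k) = 0 ∧ u (-k + 1) = 0 := by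
    intro k
    induction k with
    | zero => simpa using hc
    | succ k ih =>
      have h1 := h.2 (-k)
      simp only [jTau, ih.1, ih.2, mul_zero, add_zero, zero_add] at h1
      push_cast
      rw [show -((k : ℤ) + 1) = -k - 1 by ring, sub_add_cancel]
      exact ⟨(mul_eq_zero.1 h1).resolve_left (ha _).ne, ih.1⟩
  funext m
  rcases Int.le_total 0 m with hm | hm
  · obtain ⟨k, rfl⟩ := Int.eq_ofNat_of_zero_le hm
    exact (up k).1
  · obtain ⟨k, hk⟩ := Int.eq_ofNat_of_zero_le (show 0 ≤ -m by omega)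
    have := (down k).1
    rwa [← hk, neg_neg] at this

lemma exists_rightSol {a : ℤ → ℝ} (b : ℤ → ℝ) (z : ℝ) (ha : ∀ n, a n < 0) :
    ∃ u : ℤ → ℝ, RightSol a b z u ∧ u 0 = 0 := by
  -- `f k` is the pair `(u k, u (k + 1))`, started at `(0, 1)`.
  let f : ℕ → ℝ × ℝ := fun k => Nat.rec (0, 1)
    (fun k x => (x.2, ((z - b (k + 1)) * x.2 - a k * x.1) / a (k + 1))) k
  let u : ℤ → ℝ := fun n => (f n.toNat).1
  have hs : ∀ k, (f (k + 1)).1 = (f k).2 := fun k => rfl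
  have hs2 : ∀ k : ℕ, (f (k + 1)).2 =
    ((z - b (k + 1)) * (f k).2 - a k * (f k).1) / a (k + 1) := fun k => rfl
  have u0 : u 0 = 0 := rfl
  have u1 : u 1 = 1 := rfl
  have eqn : ∀ n : ℤ, 1 ≤ n → jTau a b u n = z * u n := by
    intro n hn
    obtain ⟨k, hk⟩ := Int.eq_ofNat_of_zero_le (show 0 ≤ n - 1 by omega)
    obtain rfl : n = k + 1 := by omega
    have e0 : u (k : ℤ) = (f k).1 := rfl
    have e1 : u ((k : ℤ) + 1) = (f k).2 := rfl
    have e2 : u ((k : ℤ) + 1 + 1) =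
      ((z - b (k + 1)) * (f k).2 - a k * (f k).1) / a (k + 1) := rfl
    have := (ha (k + 1)).ne
    rw [jTau, add_sub_cancel_right, e0, e1, e2]
    field_simp
    ring
  exact ⟨u, ⟨eqn, nondeg_of_eqn ha eqn (by simp [u1])⟩, u0⟩

/-! ### Summing the local identity -/

/-- Telescoped form of `jSgn_eq`. -/
lemma cntCC_eq {a0 b0 a1 b1 : ℤ → ℝ} {z0 z1 : ℝ} {u0 u1 : ℤ → ℝ}
    (ha0 : ∀ n, a0 n < 0) (ha1 : ∀ n, a1 n < 0)
    (h0 : RightSol a0 b0 z0 u0) (h1 : RightSol a1 b1 z1 u1) (N : ℕ) :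
    cntCC a0 a1 u0 u1 0 N = nodeSum u1 N - nodeSum u0 N
      + posInd a0 a1 u0 u1 N - posInd a0 a1 u0 u1 0 := by
  have hr : cntCC a0 a1 u0 u1 0 N = ∑ j ∈ Finset.range N, jSgn a0 a1 u0 u1 j := by
    unfold cntCC
    induction N with
    | zero => simp
    | succ N ih =>
      rw [Finset.sum_range_succ, ← ih]
      push_cast
      have hI : Finset.Ico (0 : ℤ) (N + 1) = insert (N : ℤ) (Finset.Ico (0 : ℤ) N) := by
        ext j
        simp only [Finset.mem_Ico, Finset.mem_insert]
        omega
      rw [hI, Finset.sum_insert (by simp), add_comm]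
  rw [hr]
  clear hr
  induction N with
  | zero => simp [nodeSum]
  | succ N ih =>
    unfold nodeSum at *
    rw [Finset.sum_range_succ, Finset.sum_range_succ, Finset.sum_range_succ, ih,
      jSgn_eq ha0 ha1 h0 h1 (Int.natCast_nonneg N)]
    push_cast
    ring

lemma orient_mul_self_nonneg (u : ℤ → ℝ) (n : ℤ) : 0 ≤ orient u n * u n := by
  unfold orient
  split_ifs with h
  · simp [h]
  · exact mul_self_nonneg _

lemma posInd_of_left_zero {a0 a1 u0 u1 : ℤ → ℝ} {n : ℤ} (ha0 : ∀ n, a0 n < 0)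
    (h : u0 n = 0) : posInd a0 a1 u0 u1 n = 0 := by
  unfold posInd
  rw [if_neg]
  have h1 := orient_mul_self_nonneg u1 n
  have e : orient u0 n * orient u1 n * jW a0 a1 u0 u1 n =
      a0 n * (u0 (n + 1) ^ 2 * (orient u1 n * u1 n)) := by
    simp only [jW, h, orient, if_true]
    ring
  rw [e, not_lt]
  exact mul_nonpos_of_nonpos_of_nonneg (ha0 n).le (by positivity)

open Classical in
lemma posInd_of_right_zero {a0 a1 u0 u1 : ℤ → ℝ} {n : ℤ} (ha1 : ∀ n, a1 n < 0)
    (h : u1 n = 0) (h' : u1 (n + 1) ≠ 0) :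
    posInd a0 a1 u0 u1 n = if u0 n = 0 then 0 else 1 := by
  unfold posInd
  have e : orient u0 n * orient u1 n * jW a0 a1 u0 u1 n =
      -a1 n * (u1 (n + 1) ^ 2 * (orient u0 n * u0 n)) := by
    simp only [jW, h, orient, if_true]
    ring
  rw [e]
  by_cases h0 : u0 n = 0
  · simp [h0]
  · have : 0 < orient u0 n * u0 n := by
      simp only [orient, if_neg h0]
      exact mul_self_pos.2 h0
    have h2 := ha1 n
    rw [if_pos (mul_pos (by linarith) (by positivity)), if_neg h0]

lemma jW_eq_zero_of_left {a0 a1 u0 u1 : ℤ → ℝ} {n : ℤ} (ha0 : ∀ n, a0 n < 0)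
    (h : u0 n = 0) (h' : u0 (n + 1) ≠ 0) : jW a0 a1 u0 u1 n = 0 ↔ u1 n = 0 := by
  simp [jW, h, h', (ha0 n).ne]

lemma jW_eq_zero_of_right {a0 a1 u0 u1 : ℤ → ℝ} {n : ℤ} (ha1 : ∀ n, a1 n < 0)
    (h : u1 n = 0) (h' : u1 (n + 1) ≠ 0) : jW a0 a1 u0 u1 n = 0 ↔ u0 n = 0 := by
  simp [jW, h, h', (ha1 n).ne]

lemma RightSol.next_ne {a b : ℤ → ℝ} {z : ℝ} {u : ℤ → ℝ} (h : RightSol a b z u) {n : ℤ}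
    (hn : 0 ≤ n) (h0 : u n = 0) : u (n + 1) ≠ 0 :=
  (h.nondeg n hn).resolve_left (not_not.2 h0)

open Classical in
lemma cntCO_plus_minus {a0 b0 a1 b1 : ℤ → ℝ} {z0 z1 : ℝ} {u0 u1 : ℤ → ℝ}
    (ha0 : ∀ n, a0 n < 0) (ha1 : ∀ n, a1 n < 0)
    (h0 : RightSol a0 b0 z0 u0) (h1 : RightSol a1 b1 z1 u1) (N : ℕ)
    (e0 : u0 N = 0) (e1 : u1 0 = 0) :
    cntCO a0 a1 u0 u1 0 N = (nodeSum u1 N + if u1 N = 0 then 1 else 0)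
      - (nodeSum u0 N + if u0 0 = 0 then 0 else 1) := by
  have k1 := h1.next_ne le_rfl e1
  have k0 := h0.next_ne (Int.natCast_nonneg N) e0
  simp only [cntCO, cntCC_eq ha0 ha1 h0 h1 N, posInd_of_left_zero ha0 e0,
    posInd_of_right_zero ha1 e1 k1, jW_eq_zero_of_left ha0 e0 k0]
  ring

open Classical in
lemma cntCO_minus_plus {a0 b0 a1 b1 : ℤ → ℝ} {z0 z1 : ℝ} {u0 u1 : ℤ → ℝ}
    (ha0 : ∀ n, a0 n < 0) (ha1 : ∀ n, a1 n < 0)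
    (h0 : RightSol a0 b0 z0 u0) (h1 : RightSol a1 b1 z1 u1) (N : ℕ)
    (e0 : u0 0 = 0) (e1 : u1 N = 0) :
    cntCO a0 a1 u0 u1 0 N = nodeSum u1 N - nodeSum u0 N + 1 := by
  have k1 := h1.next_ne (Int.natCast_nonneg N) e1
  simp only [cntCO, cntCC_eq ha0 ha1 h0 h1 N, posInd_of_left_zero ha0 e0,
    posInd_of_right_zero ha1 e1 k1, jW_eq_zero_of_right ha1 e1 k1]
  split_ifs <;> ring

/-! ### Comparing solutions of one operator -/

lemma jW_step {a b : ℤ → ℝ} {z0 z1 : ℝ} {u0 u1 : ℤ → ℝ}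
    (h0 : RightSol a b z0 u0) (h1 : RightSol a b z1 u1) {n : ℤ} (hn : 0 ≤ n) :
    jW a a u0 u1 (n + 1) = jW a a u0 u1 n + (z1 - z0) * (u0 (n + 1) * u1 (n + 1)) := by
  have e0 := h0.eqn (n + 1) (by omega)
  have e1 := h1.eqn (n + 1) (by omega)
  simp only [jTau, add_sub_cancel_right] at e0 e1
  simp only [jW]
  linear_combination u0 (n + 1) * e1 - u1 (n + 1) * e0

open Classical in
/-- For one operator at one energy the Wronskian is constant, so it has no weighted nodes; the
telescoped identity then compares the node counts of the solutions vanishing at `N` and at `0`. -/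
lemma nodeSum_minus_eq {a b : ℤ → ℝ} {z : ℝ} {up um : ℤ → ℝ} (ha : ∀ n, a n < 0)
    (hp : RightSol a b z up) (hm : RightSol a b z um) (N : ℕ)
    (ep : up N = 0) (em : um 0 = 0) :
    (um N = 0 ↔ up 0 = 0) ∧ nodeSum um N = nodeSum up N + if up 0 = 0 then 0 else 1 := by
  have hW : ∀ n : ℕ, jW a a up um n = jW a a up um 0 := by
    intro n
    induction n with
    | zero => simp
    | succ n ih =>
      push_cast
      rw [jW_step hp hm (Int.natCast_nonneg n), ih, sub_self, zero_mul, add_zero]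
  have hi : um N = 0 ↔ up 0 = 0 := by
    rw [← jW_eq_zero_of_left (a1 := a) (u1 := um) ha ep (hp.next_ne (Int.natCast_nonneg N) ep),
      ← jW_eq_zero_of_right (a0 := a) (u0 := up) ha em (hm.next_ne le_rfl em), hW]
  have hz : cntCC a a up um 0 N = 0 := by
    refine Finset.sum_eq_zero fun j hj => ?_
    obtain ⟨k, rfl⟩ := Int.eq_ofNat_of_zero_le (Finset.mem_Ico.1 hj).1
    have h1 := hW (k + 1)
    push_cast at h1
    have h2 := mul_self_nonneg (jW a a up um 0)
    unfold jSgn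
    rw [h1, hW k]
    rw [if_neg, if_neg]
    · rintro ⟨_, h | h⟩
      · linarith
      · exact h.1 h.2
    · rintro ⟨_, h | h⟩
      · linarith
      · exact h.2 h.1
  have key := cntCO_plus_minus ha ha hp hm N ep em
  simp only [cntCO, hz,
    jW_eq_zero_of_left ha ep (hp.next_ne (Int.natCast_nonneg N) ep)] at key
  exact ⟨hi, by linarith⟩

open Classical in
/-- Node counts of solutions vanishing at `0` grow with the energy, and strictly across an
eigenvalue: all weighted nodes are nonnegative, and the one at site `0` is `1`. -/
lemma nodeSum_strict {a b : ℤ → ℝ} {z0 z1 : ℝ} {u0 u1 : ℤ → ℝ} (ha : ∀ n, a n < 0)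
    (hz : z0 < z1) (h0 : RightSol a b z0 u0) (h1 : RightSol a b z1 u1) (e0 : u0 0 = 0)
    (e1 : u1 0 = 0) {N : ℕ} (hN : 1 ≤ N) :
    nodeSum u0 N + (if u0 N = 0 then 1 else 0) ≤ nodeSum u1 N := by
  have hnn : ∀ j ∈ Finset.Ico (0 : ℤ) N, 0 ≤ jSgn a a u0 u1 j := by
    intro j hj
    have hs := jW_step h0 h1 (Finset.mem_Ico.1 hj).1
    unfold jSgn
    split_ifs with c1 c2
    · norm_num
    · exfalso
      obtain ⟨p, q⟩ := c2
      have hd : 0 < z1 - z0 := by linarith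
      have hw : jW a a u0 u1 j ≠ 0 := by
        rintro h
        simp [h] at p
      have : 0 < jW a a u0 u1 j * jW a a u0 u1 (j + 1) := by
        rw [hs]
        nlinarith [mul_pos hd p, mul_self_pos.2 hw]
      rcases q with q | q
      · linarith
      · simp [q.2] at this
    · exact le_rfl
  have hone : jSgn a a u0 u1 0 = 1 := by
    have hs := jW_step h0 h1 (le_refl (0 : ℤ))
    have w0 : jW a a u0 u1 0 = 0 := by simp [jW, e0, e1]
    have k0 := h0.next_ne le_rfl e0
    have k1 := h1.next_ne le_rfl e1
    rw [w0, zero_add (_ * _)] at hs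
    have hd : 0 < z1 - z0 := by linarith
    unfold jSgn
    rw [if_pos]
    have hpos : 0 < jW a a u0 u1 (0 + 1) * u0 (0 + 1) * u1 (0 + 1) := by
      rw [hs, mul_assoc, mul_assoc]
      exact mul_pos hd (mul_self_pos.2 (mul_ne_zero k0 k1))
    refine ⟨hpos, Or.inr ⟨w0, ?_⟩⟩
    rintro h
    rw [h] at hpos
    simp at hpos
  have hge : 1 ≤ cntCC a a u0 u1 0 N := by
    rw [← hone]
    exact Finset.single_le_sum (f := jSgn a a u0 u1) hnn (Finset.mem_Ico.2 ⟨le_rfl, by omega⟩)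
  rw [cntCC_eq ha ha h0 h1 N, posInd_of_left_zero ha e0] at hge
  split_ifs with h
  · rw [posInd_of_left_zero ha h] at hge
    linarith
  · have : posInd a a u0 u1 N ≤ 1 := by
      unfold posInd
      split_ifs <;> norm_num
    linarith

lemma nodeInd_nonneg (u : ℤ → ℝ) (n : ℤ) : 0 ≤ nodeInd u n := by
  unfold nodeInd
  split_ifs <;> norm_num

lemma nodeInd_le_one (u : ℤ → ℝ) (n : ℤ) : nodeInd u n ≤ 1 := by
  unfold nodeInd
  split_ifs <;> norm_num

lemma one_le_nodeSum {u : ℤ → ℝ} (h : u 0 = 0) {N : ℕ} (hN : 1 ≤ N) : 1 ≤ nodeSum u N := by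
  have : nodeInd u ((0 : ℕ) : ℤ) = 1 := by simp [nodeInd, h]
  rw [← this]
  exact Finset.single_le_sum (f := fun j : ℕ => nodeInd u j) (fun j _ => nodeInd_nonneg u j)
    (Finset.mem_range.2 hN)

open Classical in
/-- If `u N = 0` then `N - 1` is not a node, whence the extra term on the left. -/
lemma nodeSum_le {a b : ℤ → ℝ} {z : ℝ} {u : ℤ → ℝ} (h : RightSol a b z u) {N : ℕ}
    (hN : 1 ≤ N) : nodeSum u N + (if u N = 0 then 1 else 0) ≤ N := by
  obtain ⟨m, rfl⟩ := Nat.exists_eq_add_of_le' hN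
  have h1 : nodeSum u m ≤ m := by
    calc nodeSum u m ≤ ∑ _j ∈ Finset.range m, (1 : ℤ) :=
          Finset.sum_le_sum fun j _ => nodeInd_le_one u j
      _ = m := by simp
  have h2 : nodeSum u (m + 1) = nodeSum u m + nodeInd u m := Finset.sum_range_succ _ _
  have h3 : nodeInd u m + (if u ((m + 1 : ℕ) : ℤ) = 0 then 1 else 0) ≤ 1 := by
    split_ifs with h4
    · push_cast at h4
      have h5 := (h.nondeg m (Int.natCast_nonneg m)).resolve_right (not_not.2 h4)
      simp [nodeInd, h4, h5]
    · simpa using nodeInd_le_one u m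
  push_cast
  push_cast at h3
  linarith

/-! ### Eigenvalues of the Jacobi matrix -/

lemma jMatrix_mulVec (m : ℕ) (a b u : ℤ → ℝ) (h0 : u 0 = 0) (hN : u (m + 1) = 0) (i : Fin m) :
    (jMatrix (m + 1) a b).mulVec (fun j : Fin m => u (j + 1)) i = jTau a b u (i + 1) := by
  have e : (jMatrix (m + 1) a b).mulVec (fun j : Fin m => u (j + 1)) i =
      ∑ j ∈ Finset.range m, ((if (i : ℕ) = j then b (i + 1) * u (j + 1) else 0)
        + (if (i : ℕ) + 1 = j then a (i + 1) * u (j + 1) else 0)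
        + (if (i : ℕ) = j + 1 then a (j + 1) * u (j + 1) else 0)) := by
    rw [← Fin.sum_univ_eq_sum_range]
    simp only [Matrix.mulVec, dotProduct]
    refine Finset.sum_congr rfl fun j _ => ?_
    simp only [jMatrix]
    split_ifs <;> first | omega | simp
  rw [e, Finset.sum_add_distrib, Finset.sum_add_distrib, Finset.sum_ite_eq, Finset.sum_ite_eq,
    if_pos (Finset.mem_range.2 i.2), jTau]
  have e1 : (if (i : ℕ) + 1 ∈ Finset.range m then a (i + 1) * u (((i : ℕ) + 1 : ℕ) + 1) else 0)
      = a (i + 1) * u (i + 1 + 1) := by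
    split_ifs with h
    · push_cast; rfl
    · have : (m : ℤ) = i + 1 := by
        have := i.2
        simp only [Finset.mem_range] at h
        omega
      rw [← this, hN, mul_zero]
  have e2 : (∑ j ∈ Finset.range m, if (i : ℕ) = j + 1 then a (j + 1) * u (j + 1) else 0)
      = a (i + 1 - 1) * u (i + 1 - 1) := by
    obtain ⟨i, hi⟩ := i
    cases i with
    | zero => simp [h0]
    | succ k =>
      have : ∀ j : ℕ, (k + 1 = j + 1) = (k = j) := by simp
      simp only [this]
      rw [Finset.sum_ite_eq, if_pos (Finset.mem_range.2 (by omega))]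
      push_cast
      simp
  rw [e1, e2]
  ring

lemma proportional_of_eqn {a b : ℤ → ℝ} {z : ℝ} {u w : ℤ → ℝ} (ha : ∀ n, a n < 0)
    (hu : RightSol a b z u) (u0 : u 0 = 0) (w0 : w 0 = 0) (m : ℕ)
    (hw : ∀ n : ℤ, 1 ≤ n → n ≤ m → jTau a b w n = z * w n) :
    ∀ k : ℕ, k ≤ m + 1 → w k = w 1 / u 1 * u k := by
  have u1 : u 1 ≠ 0 := by simpa using hu.next_ne le_rfl u0
  have key : ∀ k : ℕ, k ≤ m → w k = w 1 / u 1 * u k ∧ w (k + 1) = w 1 / u 1 * u (k + 1) := by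
    intro k
    induction k with
    | zero =>
      intro _
      simp only [Nat.cast_zero, zero_add, u0, w0, mul_zero, true_and]
      field_simp
    | succ k ih =>
      intro hk
      obtain ⟨i1, i2⟩ := ih (by omega)
      push_cast
      refine ⟨i2, ?_⟩
      have e1 := hw (k + 1) (by omega) (by omega)
      have e2 := hu.eqn (k + 1) (by omega)
      simp only [jTau, add_sub_cancel_right, i1, i2] at e1 e2
      apply mul_left_cancel₀ (ha (k + 1)).ne
      linear_combination e1 - w 1 / u 1 * e2
  intro k hk
  rcases Nat.lt_or_ge k (m + 1) with h | h
  · exact (key k (by omega)).1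
  · obtain rfl : k = m + 1 := by omega
    push_cast
    exact (key m le_rfl).2

/-- Eigenvectors of the Jacobi matrix are multiples of the solution vanishing at `0`, restricted to
`1, …, m`. -/
lemma eigenvector_eq {m : ℕ} {a b : ℤ → ℝ} {z : ℝ} {u : ℤ → ℝ} (ha : ∀ n, a n < 0)
    (hu : RightSol a b z u) (u0 : u 0 = 0) {v : Fin m → ℝ}
    (hv : (jMatrix (m + 1) a b).mulVec v = z • v) :
    ∃ c : ℝ, (∀ i : Fin m, v i = c * u (i + 1)) ∧ c * u (m + 1) = 0 := by
  -- `w` is the eigenvector extended by zero to all sites.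
  let w : ℤ → ℝ := fun n =>
    if h : 1 ≤ n ∧ n ≤ m then v ⟨(n - 1).toNat, by omega⟩ else 0
  have w0 : w 0 = 0 := by simp [w]
  have wN : w (m + 1) = 0 := by simp [w]
  have wv : ∀ i : Fin m, w (i + 1) = v i := by
    intro i
    have := i.2
    have hc : 1 ≤ (i : ℤ) + 1 ∧ (i : ℤ) + 1 ≤ m := by omega
    simp only [w, dif_pos hc]
    congr 1
    ext
    simp
  have hw : ∀ n : ℤ, 1 ≤ n → n ≤ m → jTau a b w n = z * w n := by
    intro n h1 h2
    have hm := jMatrix_mulVec m a b w w0 wN ⟨(n - 1).toNat, by omega⟩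
    have e : (fun j : Fin m => w (j + 1)) = v := funext wv
    have en : (((n - 1).toNat : ℕ) : ℤ) + 1 = n := by omega
    rw [e, hv] at hm
    simp only [en, Pi.smul_apply, smul_eq_mul] at hm
    rw [← hm, ← wv]
    simp only [en]
  have hp := proportional_of_eqn ha hu u0 w0 m hw
  refine ⟨w 1 / u 1, fun i => ?_, ?_⟩
  · have := hp (i + 1) (by omega)
    push_cast at this
    rw [← wv, this]
  · have := hp (m + 1) le_rfl
    push_cast at this
    rw [← this, wN]

lemma isEV_iff {m : ℕ} {a b : ℤ → ℝ} {z : ℝ} {u : ℤ → ℝ} (hm : 1 ≤ m) (ha : ∀ n, a n < 0)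
    (hu : RightSol a b z u) (u0 : u 0 = 0) :
    IsEV (jMatrix (m + 1) a b) z ↔ u (m + 1) = 0 := by
  constructor
  · rintro ⟨v, hv0, hv⟩
    obtain ⟨c, hc, hcN⟩ := eigenvector_eq ha hu u0 hv
    refine (mul_eq_zero.1 hcN).resolve_left ?_
    rintro rfl
    exact hv0 (funext fun i => by simpa using hc i)
  · intro hN
    refine ⟨fun i : Fin m => u (i + 1), fun h => ?_, funext fun i => ?_⟩
    · have := congrFun h ⟨0, hm⟩
      exact hu.next_ne le_rfl u0 (by simpa using this)
    · rw [jMatrix_mulVec m a b u u0 hN i, hu.eqn _ (by omega)]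
      rfl

/-- The Jacobi matrix has `m` distinct eigenvalues: it is symmetric and its eigenspaces are
one-dimensional by `eigenvector_eq`. -/
lemma exists_eigenvalues {m : ℕ} {a : ℤ → ℝ} (b : ℤ → ℝ) (ha : ∀ n, a n < 0) :
    ∃ S : Finset ℝ, S.card = m ∧ ∀ z, z ∈ S ↔ IsEV (jMatrix (m + 1) a b) z := by
  let J : Matrix (Fin m) (Fin m) ℝ := jMatrix (m + 1) a b
  have hJ : J.IsHermitian := by
    ext i j
    simp only [J, jMatrix, Matrix.conjTranspose_apply, star_trivial]
    split_ifs <;> first | omega | (congr 2; omega) | rfl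
  have hvec : ∀ i, J.mulVec (hJ.eigenvectorBasis i) = hJ.eigenvalues i • ⇑(hJ.eigenvectorBasis i) :=
    fun i => by simpa using hJ.mulVec_eigenvectorBasis i
  have hinj : Function.Injective hJ.eigenvalues := by
    intro i j hij
    by_contra hne
    obtain ⟨u, hu, u0⟩ := exists_rightSol b (hJ.eigenvalues i) ha
    obtain ⟨c, hc, -⟩ := eigenvector_eq ha hu u0 (hvec i)
    obtain ⟨d, hd, -⟩ := eigenvector_eq ha hu u0 (by rw [hij]; exact hvec j)
    have hli := hJ.eigenvectorBasis.orthonormal.linearIndependent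
    have h0 : d • hJ.eigenvectorBasis i + (-c) • hJ.eigenvectorBasis j = 0 := by
      ext k
      simp [hc k, hd k]
      ring
    have hc0 : c = 0 := by
      have h2 := congrArg (inner ℝ (hJ.eigenvectorBasis j)) h0
      have ho := orthonormal_iff_ite.1 hJ.eigenvectorBasis.orthonormal
      rw [inner_add_right, inner_smul_right, inner_smul_right, ho, ho, if_neg (Ne.symm hne),
        if_pos rfl, inner_zero_right] at h2
      linarith
    apply hli.ne_zero i
    ext k
    have h3 := hc k
    rw [hc0, zero_mul] at h3
    simpa using h3
  refine ⟨Finset.univ.image hJ.eigenvalues, ?_, fun z => ?_⟩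
  · rw [Finset.card_image_of_injective _ hinj]
    simp
  · constructor
    · intro hz
      obtain ⟨i, -, rfl⟩ := Finset.mem_image.1 hz
      refine ⟨_, ?_, hvec i⟩
      intro h
      apply hJ.eigenvectorBasis.orthonormal.linearIndependent.ne_zero i
      ext k
      exact congrFun h k
    · rintro ⟨v, hv0, hv⟩
      have : z ∈ spectrum ℝ J := by
        rw [← Matrix.spectrum_toLin']
        apply Module.End.HasEigenvalue.mem_spectrum
        apply Module.End.hasEigenvalue_of_hasEigenvector (x := v)
        exact ⟨Module.End.mem_eigenspace_iff.2 (by rw [Matrix.toLin'_apply]; exact hv), hv0⟩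
      rw [hJ.spectrum_real_eq_range_eigenvalues] at this
      obtain ⟨i, rfl⟩ := this
      exact Finset.mem_image_of_mem _ (Finset.mem_univ i)

open Classical in
/-- Oscillation theorem for a single operator: the eigenvalues below `z` are counted by the nodes at
`1, …, N - 1` of the solution vanishing at `0`, whose node at `0` accounts for the `- 1`. -/
lemma evCount_eq {N : ℕ} {a b : ℤ → ℝ} {z : ℝ} {u : ℤ → ℝ} (hN : 2 ≤ N) (ha : ∀ n, a n < 0)
    (hu : RightSol a b z u) (u0 : u 0 = 0) :
    (evCount (jMatrix N a b) (Set.Iio z) : ℤ) = nodeSum u N - 1 ∧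
    (evCount (jMatrix N a b) (Set.Iic z) : ℤ) =
      nodeSum u N - 1 + if u N = 0 then 1 else 0 := by
  obtain ⟨m, rfl⟩ := Nat.exists_eq_add_of_le' (show 1 ≤ N by omega)
  obtain ⟨S, hcard, hS⟩ := exists_eigenvalues (m := m) b ha
  choose v0 hv0 hv00 using fun x => exists_rightSol b x ha
  -- One solution vanishing at `0` for every energy, the given `u` being the one at energy `z`.
  obtain ⟨v, hv, hv0, hvz⟩ : ∃ v : ℝ → ℤ → ℝ, (∀ x, RightSol a b x (v x)) ∧ (∀ x, v x 0 = 0) ∧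
      v z = u := by
    refine ⟨Function.update v0 z u, fun x => ?_, fun x => ?_, by simp⟩ <;>
    · by_cases h : x = z
      · subst h; simpa
      · simp [h, hv0, hv00]
  have hSv : ∀ x, x ∈ S ↔ v x ((m + 1 : ℕ) : ℤ) = 0 := by
    intro x
    rw [hS, isEV_iff (by omega) ha (hv x) (hv0 x)]
    push_cast
    rfl
  have mono : ∀ x y, x < y → nodeSum (v x) (m + 1) +
      (if v x ((m + 1 : ℕ) : ℤ) = 0 then 1 else 0) ≤ nodeSum (v y) (m + 1) := fun x y hxy =>
    nodeSum_strict ha hxy (hv x) (hv y) (hv0 x) (hv0 y) (by omega)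
  have monoS : ∀ x ∈ S, ∀ y, x < y → nodeSum (v x) (m + 1) < nodeSum (v y) (m + 1) := by
    intro x hx y hxy
    have := mono x y hxy
    rw [if_pos ((hSv x).1 hx)] at this
    omega
  have injS : Set.InjOn (fun x => nodeSum (v x) (m + 1)) (S : Set ℝ) := by
    intro x hx y hy hxy
    rcases lt_trichotomy x y with h | h | h
    · exact absurd hxy (monoS x hx y h).ne
    · exact h
    · exact absurd hxy (monoS y hy x h).ne'
  -- Distinct eigenvalues have distinct node counts; those below `z` have counts in
  -- `[1, nodeSum u)`, those above in `[nodeSum u + [u N = 0], m + 1)`. As there are `m` eigenvalues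
  -- in all, both bounds are attained.
  have hlow : ((S.filter (· < z)).card : ℤ) ≤ nodeSum u (m + 1) - 1 := by
    have := Finset.card_le_card_of_injOn (s := S.filter (· < z))
      (t := Finset.Ico 1 (nodeSum u (m + 1))) (fun x => nodeSum (v x) (m + 1))
      (by
        intro x hx
        obtain ⟨hx, hxz⟩ := Finset.mem_filter.1 hx
        have h2 := monoS x hx z hxz
        rw [hvz] at h2
        simpa using ⟨one_le_nodeSum (hv0 x) (by omega), h2⟩)
      (injS.mono (Finset.coe_subset.2 (Finset.filter_subset _ _)))
    have h1 := one_le_nodeSum u0 (show 1 ≤ m + 1 by omega)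
    rw [Int.card_Ico] at this
    omega
  have hhigh : ((S.filter (z < ·)).card : ℤ) ≤
      (m + 1) - (nodeSum u (m + 1) + if u ((m + 1 : ℕ) : ℤ) = 0 then 1 else 0) := by
    have := Finset.card_le_card_of_injOn (s := S.filter (z < ·))
      (t := Finset.Ico (nodeSum u (m + 1) + if u ((m + 1 : ℕ) : ℤ) = 0 then 1 else 0) (m + 1 : ℤ))
      (fun x => nodeSum (v x) (m + 1))
      (by
        intro x hx
        obtain ⟨hx, hxz⟩ := Finset.mem_filter.1 hx
        have h2 := mono z x hxz
        have h3 := nodeSum_le (hv x) (show 1 ≤ m + 1 by omega)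
        rw [if_pos ((hSv x).1 hx)] at h3
        rw [hvz] at h2
        push_cast at h3 h2
        simp only [Finset.coe_Ico, Set.mem_Ico]
        push_cast
        exact ⟨h2, by omega⟩)
      (injS.mono (Finset.coe_subset.2 (Finset.filter_subset _ _)))
    have h1 := nodeSum_le hu (show 1 ≤ m + 1 by omega)
    rw [Int.card_Ico] at this
    push_cast at *
    omega
  have hmid : ((S.filter (· = z)).card : ℤ) = if u ((m + 1 : ℕ) : ℤ) = 0 then 1 else 0 := by
    rw [Finset.filter_eq']
    have := hSv z
    rw [hvz] at this
    simp only [this]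
    split_ifs <;> simp
  have hle : (S.filter (· ≤ z)).card = (S.filter (· < z)).card + (S.filter (· = z)).card := by
    rw [← Finset.card_union_of_disjoint, ← Finset.filter_or]
    · simp only [le_iff_lt_or_eq]
    · exact Finset.disjoint_filter.2 fun x _ h1 h2 => h1.ne h2
  have htot : (S.filter (· ≤ z)).card + (S.filter (z < ·)).card = m := by
    rw [← hcard, ← Finset.card_filter_add_card_filter_not (s := S) (· ≤ z)]
    simp only [not_le]
  have c1 : evCount (jMatrix (m + 1) a b) (Set.Iio z) = (S.filter (· < z)).card := by
    rw [evCount, ← Set.ncard_coe_finset]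
    congr 1
    ext x
    simp [hS, and_comm]
  have c2 : evCount (jMatrix (m + 1) a b) (Set.Iic z) = (S.filter (· ≤ z)).card := by
    rw [evCount, ← Set.ncard_coe_finset]
    congr 1
    ext x
    simp [hS, and_comm]
  rw [c1, c2]
  generalize (if u ((m + 1 : ℕ) : ℤ) = 0 then (1 : ℤ) else 0) = Z at *
  constructor <;> omega

/-- Relative Oscillation Theorem (case 3). -/
theorem stmt_3 (N : ℕ) (hN : 2 ≤ N)
    (a0 b0 a1 b1 : ℤ → ℝ)
    (ha0 : ∀ n : ℤ, a0 n < 0) (ha1 : ∀ n : ℤ, a1 n < 0)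
    (lam0 lam1 : ℝ)
    (u0m u0p u1m u1p : ℤ → ℝ)
    (h0m : IsJSolution a0 b0 lam0 u0m) (h0m0 : u0m 0 = 0)
    (h0p : IsJSolution a0 b0 lam0 u0p) (h0pN : u0p (N : ℤ) = 0)
    (h1m : IsJSolution a1 b1 lam1 u1m) (h1m0 : u1m 0 = 0)
    (h1p : IsJSolution a1 b1 lam1 u1p) (h1pN : u1p (N : ℤ) = 0) :
    ((evCount (jMatrix N a1 b1) (Set.Iic lam1) : ℤ)
        - (evCount (jMatrix N a0 b0) (Set.Iio lam0) : ℤ)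
      = cntCO a0 a1 u0p u1m 0 (N : ℤ)) ∧
    ((evCount (jMatrix N a1 b1) (Set.Iic lam1) : ℤ)
        - (evCount (jMatrix N a0 b0) (Set.Iio lam0) : ℤ)
      = cntCO a0 a1 u0m u1p 0 (N : ℤ)) := by
  have g0m := h0m.rightSol ha0
  have g0p := h0p.rightSol ha0
  have g1m := h1m.rightSol ha1
  have g1p := h1p.rightSol ha1
  obtain ⟨lt0, -⟩ := evCount_eq hN ha0 g0m h0m0
  obtain ⟨-, le1⟩ := evCount_eq hN ha1 g1m h1m0
  obtain ⟨-, m0⟩ := nodeSum_minus_eq ha0 g0p g0m N h0pN h0m0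
  obtain ⟨i1, m1⟩ := nodeSum_minus_eq ha1 g1p g1m N h1pN h1m0
  rw [cntCO_plus_minus ha0 ha1 g0p g1m N h0pN h1m0, cntCO_minus_plus ha0 ha1 g0m g1p N h0m0 h1pN,
    lt0, le1]
  refine ⟨by linarith, ?_⟩
  rw [m1]
  by_cases h : u1p 0 = 0
  · rw [if_pos h, if_pos (i1.2 h)]
    ring
  · rw [if_neg h, if_neg (fun hc => h (i1.1 hc))]
    ring
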